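/- arXiv:math/0112086 — 3 statements merged into one kernel-verified Lean document; each statement's English description precedes it below -/
import Mathlib

section
/- Let d and r be positive integers and let S be a set of positive integers with S ⊆ {1,…,d}. Then the minimum of s(k) over all k ∈ K_r satisfying k_ℓ = k_{ℓ+1} for every ℓ ∈ {1,…,d} with ℓ ∉ S (with the convention k_{d+1} := 0) equals s̃(r,S); in particular, this constrained set is nonempty if and only if an r-tiling sequence with tiles in S exists, and when both sides are finite the minimum is attained and equals s̃(r,S). -/
open scoped BigOperators

/-- `s(n)`: the number of 1's in the binary expansion of `n`. -/
def binDigitSum (n : ℕ) : ℕ := (Nat.digits 2 n).sum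

/-- An `r`-tiling sequence with tiles in `S`, recorded as a list of pairs `(b_i, ℓ_i)`:
each `ℓ_i ∈ S`, the `b_i` are weakly increasing, `ℓ_i > ℓ_{i+1}` whenever `b_i = b_{i+1}`,
and `∑ ℓ_i·2^{b_i} = r`. -/
def IsTiling (S : Finset ℕ) (r : ℕ) (L : List (ℕ × ℕ)) : Prop :=
  (∀ p ∈ L, p.2 ∈ S) ∧
  L.Chain' (fun p q => p.1 ≤ q.1 ∧ (p.1 = q.1 → q.2 < p.2)) ∧
  (L.map fun p => p.2 * 2 ^ p.1).sum = r

/-- `s̃(r,S)`: the minimal length of an `r`-tiling sequence (`⊤` if none exists). -/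
noncomputable def stilde (S : Finset ℕ) (r : ℕ) : ℕ∞ :=
  sInf {n : ℕ∞ | ∃ L : List (ℕ × ℕ), IsTiling S r L ∧ (L.length : ℕ∞) = n}

/-- `K̃(r,S)`: the set of `r`-tiling sequences of minimal length. -/
def Ktilde (S : Finset ℕ) (r : ℕ) : Set (List (ℕ × ℕ)) :=
  {L | IsTiling S r L ∧ (L.length : ℕ∞) = stilde S r}

/-- `K_r`: weakly decreasing `d`-tuples of nonnegative integers summing to `r`. -/
def Kset (d r : ℕ) : Set (Fin d → ℕ) := {k | Antitone k ∧ ∑ i, k i = r}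

/-- The entry following `k i`, with the convention `k_{d+1} = 0`. -/
def nextEntry {d : ℕ} (k : Fin d → ℕ) (i : Fin d) : ℕ :=
  if h : (i : ℕ) + 1 < d then k ⟨(i : ℕ) + 1, h⟩ else 0

/-- `s(k) = s(k_1−k_2)+s(k_2−k_3)+⋯+s(k_{d−1}−k_d)+s(k_d)`. -/
def sBox {d : ℕ} (k : Fin d → ℕ) : ℕ := ∑ i, binDigitSum (k i - nextEntry k i)

/-!
Both sides describe the ways of writing `r = ∑ ℓ·a_ℓ` with `a_ℓ = 0` for `ℓ ∉ S`. A weakly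
decreasing `k` is determined by its differences `a_ℓ = k_ℓ - k_{ℓ+1}`, and summation by parts turns
`∑ k_ℓ` into `∑ ℓ·a_ℓ`, so `s(k) = ∑ s(a_ℓ)`. Expanding every `a_ℓ` in base `2` replaces it by
`s(a_ℓ)` tiles `(b, ℓ)`, one for each binary digit `1`; every finite set of tiles with lengths in
`S` arises from exactly one `a`, and it can be listed as a tiling sequence in exactly one order.
Hence the two minima are taken over the same set of values.
-/

theorem binDigitSum_eq_card_bitIndices (n : ℕ) :
    binDigitSum n = n.bitIndices.toFinset.card := by
  rw [List.toFinset_card_of_nodup Nat.bitIndices_nodup, binDigitSum, Nat.digits_two_eq_bits]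
  induction n using Nat.evenOddRec with
  | h0 => simp
  | h_even n ih =>
    rcases eq_or_ne n 0 with rfl | hn
    · simp
    · simp [Nat.bit0_bits n hn, ih]
  | h_odd n ih =>
    rw [Nat.bit1_bits, Nat.bitIndices_two_mul_add_one]
    simp [ih, add_comm]

/-- Tuples `a = (a_1, …, a_d)` with `∑ ℓ·a_ℓ = r` and `a_ℓ = 0` for `ℓ ∉ S`: the number `a_ℓ`,
stored at the index `ℓ - 1`, counts how often `ℓ` is used as a part in a partition of `r` with
parts in `S`. -/
def partCounts (d : ℕ) (S : Finset ℕ) (r : ℕ) : Set (Fin d → ℕ) :=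
  {a | (∀ i : Fin d, (i : ℕ) + 1 ∉ S → a i = 0) ∧ ∑ i : Fin d, ((i : ℕ) + 1) * a i = r}

section TailSum

/-- The tuple `(a_1 + ⋯ + a_d, a_2 + ⋯ + a_d, …, a_d)` of tail sums of `a`; it inverts passing to
the differences `k_ℓ - k_{ℓ+1}`. -/
def tailSum {M : Type*} [AddCommMonoid M] {d : ℕ} (a : Fin d → M) (i : Fin d) : M :=
  ∑ j ∈ Finset.Ici i, a j

theorem antitone_tailSum {M : Type*} [AddCommMonoid M] [PartialOrder M] [CanonicallyOrderedAdd M]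
    [IsOrderedAddMonoid M] {d : ℕ} (a : Fin d → M) : Antitone (tailSum a) :=
  fun _ _ hij => Finset.sum_le_sum_of_subset (Finset.Ici_subset_Ici.2 hij)

theorem sum_tailSum {M : Type*} [AddCommMonoid M] {d : ℕ} (a : Fin d → M) :
    ∑ i, tailSum a i = ∑ i : Fin d, ((i : ℕ) + 1) • a i := by
  calc ∑ i, ∑ j ∈ Finset.Ici i, a j = ∑ j, ∑ _i ∈ Finset.Iic j, a j :=
        Finset.sum_comm' (by simp)
    _ = ∑ j : Fin d, ((j : ℕ) + 1) • a j := by simp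

variable {d r : ℕ} {k : Fin d → ℕ} {S : Finset ℕ}

theorem tailSum_eq_add_nextEntry (a : Fin d → ℕ) (i : Fin d) :
    tailSum a i = a i + nextEntry (tailSum a) i := by
  have hnext : nextEntry (tailSum a) i = ∑ j ∈ Finset.Ioi i, a j := by
    unfold nextEntry tailSum
    split_ifs with hi
    · refine Finset.sum_congr (Finset.ext fun j => ?_) fun _ _ => rfl
      simp only [Finset.mem_Ici, Finset.mem_Ioi, Fin.le_def, Fin.lt_def, Nat.succ_le_iff]
    · refine (Finset.sum_eq_zero fun j hj => ?_).symm
      have hij : (i : ℕ) < j := Fin.lt_def.1 (Finset.mem_Ioi.1 hj)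
      omega
  rw [hnext, tailSum, Finset.Ici_eq_cons_Ioi, Finset.sum_cons]

theorem tailSum_apply_sub_nextEntry (a : Fin d → ℕ) (i : Fin d) :
    tailSum a i - nextEntry (tailSum a) i = a i := by
  rw [tailSum_eq_add_nextEntry, Nat.add_sub_cancel_right]

theorem nextEntry_le_of_antitone (hk : Antitone k) (i : Fin d) : nextEntry k i ≤ k i := by
  unfold nextEntry
  split_ifs
  · exact hk (Fin.le_def.2 (Nat.le_succ i))
  · exact Nat.zero_le _

theorem tailSum_eq_of_eq_add_nextEntry {a : Fin d → ℕ} (h : ∀ i, k i = a i + nextEntry k i) :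
    tailSum a = k := by
  funext i
  induction i using WellFoundedGT.induction with
  | ind i ih =>
    rw [tailSum_eq_add_nextEntry, h i]
    unfold nextEntry
    split_ifs
    · rw [ih _ (Fin.lt_def.2 (Nat.lt_succ_self i))]
    · rfl

theorem tailSum_sub_nextEntry_of_antitone (hk : Antitone k) :
    tailSum (fun i => k i - nextEntry k i) = k :=
  tailSum_eq_of_eq_add_nextEntry fun i => (Nat.sub_add_cancel (nextEntry_le_of_antitone hk i)).symm

theorem sBox_tailSum (a : Fin d → ℕ) : sBox (tailSum a) = ∑ i, binDigitSum (a i) := by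
  simp only [sBox, tailSum_apply_sub_nextEntry]

/-- The constraint set of the minimisation: the `k ∈ K_r` with `k_ℓ = k_{ℓ+1}` for all `ℓ ∉ S`. -/
def admissibleTuples (d : ℕ) (S : Finset ℕ) (r : ℕ) : Set (Fin d → ℕ) :=
  {k | k ∈ Kset d r ∧ ∀ i : Fin d, (i : ℕ) + 1 ∉ S → k i = nextEntry k i}

theorem tailSum_mem_admissibleTuples {a : Fin d → ℕ} :
    tailSum a ∈ admissibleTuples d S r ↔ a ∈ partCounts d S r := by
  have hdiff (i : Fin d) : tailSum a i = nextEntry (tailSum a) i ↔ a i = 0 := by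
    rw [tailSum_eq_add_nextEntry, Nat.add_eq_right]
  simp only [admissibleTuples, partCounts, Kset, Set.mem_ofPred_eq, antitone_tailSum, true_and,
    sum_tailSum, smul_eq_mul, hdiff, and_comm]

theorem image_tailSum_partCounts : tailSum '' partCounts d S r = admissibleTuples d S r := by
  refine Set.Subset.antisymm (Set.image_subset_iff.2 fun a => tailSum_mem_admissibleTuples.2) ?_
  intro k hk
  have hsum := tailSum_sub_nextEntry_of_antitone hk.1.1
  exact ⟨_, tailSum_mem_admissibleTuples.1 (hsum.symm ▸ hk), hsum⟩

end TailSum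

section Tiles

variable {d r : ℕ} {S : Finset ℕ}

/-- The finite sets of pairs `(b, ℓ)` with `ℓ ∈ S` and `∑ ℓ·2^b = r`, i.e. tiling sequences with
their order forgotten. -/
def tileSets (S : Finset ℕ) (r : ℕ) : Set (Finset (ℕ × ℕ)) :=
  {T | (∀ p ∈ T, p.2 ∈ S) ∧ ∑ p ∈ T, p.2 * 2 ^ p.1 = r}

/-- The set of pairs `(b, ℓ)` for which `2^b` occurs in the binary expansion of `a_ℓ`, where `a_ℓ`
is stored at the index `ℓ - 1`. -/
def binaryTiles (a : Fin d → ℕ) : Finset (ℕ × ℕ) :=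
  (Finset.univ.sigma fun i => (a i).bitIndices.toFinset).map
    ⟨fun x => (x.2, (x.1 : ℕ) + 1), by
      rintro ⟨i, b⟩ ⟨j, c⟩ h
      obtain ⟨rfl, hij⟩ := Prod.mk.inj h
      obtain rfl := Fin.ext (Nat.succ_injective hij)
      rfl⟩

theorem mem_binaryTiles {a : Fin d → ℕ} {p : ℕ × ℕ} :
    p ∈ binaryTiles a ↔ ∃ i : Fin d, p.1 ∈ (a i).bitIndices ∧ p.2 = (i : ℕ) + 1 := by
  constructor
  · intro hp
    obtain ⟨⟨i, b⟩, hb, rfl⟩ := Finset.mem_map.1 hp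
    exact ⟨i, List.mem_toFinset.1 (Finset.mem_sigma.1 hb).2, rfl⟩
  · rintro ⟨i, hb, hpi⟩
    exact Finset.mem_map.2 ⟨⟨i, p.1⟩, by simpa using hb, Prod.ext rfl hpi.symm⟩

theorem card_binaryTiles (a : Fin d → ℕ) : (binaryTiles a).card = ∑ i, binDigitSum (a i) := by
  simp only [binaryTiles, Finset.card_map, Finset.card_sigma, binDigitSum_eq_card_bitIndices]

theorem sum_binaryTiles (a : Fin d → ℕ) :
    ∑ p ∈ binaryTiles a, p.2 * 2 ^ p.1 = ∑ i : Fin d, ((i : ℕ) + 1) * a i := by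
  calc ∑ p ∈ binaryTiles a, p.2 * 2 ^ p.1
      = ∑ i : Fin d, ∑ b ∈ (a i).bitIndices.toFinset, ((i : ℕ) + 1) * 2 ^ b := by
        rw [binaryTiles, Finset.sum_map, Finset.sum_sigma]
        rfl
    _ = ∑ i : Fin d, ((i : ℕ) + 1) * a i := by
        simp only [← Finset.mul_sum, Finset.sum_toFinset_bitIndices_two_pow]

theorem forall_binaryTiles_snd_mem_iff {a : Fin d → ℕ} :
    (∀ p ∈ binaryTiles a, p.2 ∈ S) ↔ ∀ i : Fin d, (i : ℕ) + 1 ∉ S → a i = 0 := by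
  constructor
  · intro h i hi
    have hbits : (a i).bitIndices = [] := List.eq_nil_iff_forall_not_mem.2 fun b hb =>
      hi (h (b, i + 1) (mem_binaryTiles.2 ⟨i, hb, rfl⟩))
    rw [← Nat.sum_map_two_pow_bitIndices (a i), hbits, List.map_nil, List.sum_nil]
  · intro h p hp
    obtain ⟨i, hb, hpi⟩ := mem_binaryTiles.1 hp
    by_contra hpS
    simp [h i (hpi ▸ hpS)] at hb

theorem binaryTiles_mem_tileSets {a : Fin d → ℕ} :
    binaryTiles a ∈ tileSets S r ↔ a ∈ partCounts d S r := by
  simp only [tileSets, partCounts, Set.mem_ofPred_eq, forall_binaryTiles_snd_mem_iff,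
    sum_binaryTiles]

theorem exists_binaryTiles_eq {T : Finset (ℕ × ℕ)} (hT : ∀ p ∈ T, p.2 ∈ Finset.Icc 1 d) :
    ∃ a : Fin d → ℕ, binaryTiles a = T := by
  let B (i : Fin d) : Finset ℕ := {b ∈ T.image Prod.fst | (b, (i : ℕ) + 1) ∈ T}
  have hB (i : Fin d) (b : ℕ) : b ∈ B i ↔ (b, (i : ℕ) + 1) ∈ T := by
    simp only [B, Finset.mem_filter, Finset.mem_image, and_iff_right_iff_imp]
    exact fun h => ⟨_, h, rfl⟩
  refine ⟨fun i => ∑ b ∈ B i, 2 ^ b, Finset.ext fun ⟨b, l⟩ => ?_⟩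
  simp only [mem_binaryTiles, ← List.mem_toFinset, Finset.toFinset_bitIndices_sum_two_pow, hB]
  constructor
  · rintro ⟨i, hi, rfl⟩
    exact hi
  · intro h
    obtain ⟨hl, hld⟩ := Finset.mem_Icc.1 (hT _ h)
    obtain ⟨l, rfl⟩ := Nat.exists_eq_add_of_le' hl
    exact ⟨⟨l, hld⟩, h, rfl⟩

theorem image_binaryTiles_partCounts (hS : S ⊆ Finset.Icc 1 d) :
    binaryTiles '' partCounts d S r = tileSets S r := by
  refine Set.Subset.antisymm (Set.image_subset_iff.2 fun a => binaryTiles_mem_tileSets.2) ?_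
  intro T hT
  obtain ⟨a, rfl⟩ := exists_binaryTiles_eq fun p hp => hS (hT.1 p hp)
  exact ⟨a, binaryTiles_mem_tileSets.1 hT, rfl⟩

/-- The order in which a tiling sequence lists its tiles `(b, ℓ)`: increasing in `b`, then
decreasing in `ℓ`. -/
def tileLex : ℕ × ℕ ≃ ℕ ×ₗ ℕᵒᵈ :=
  (Equiv.prodCongr (Equiv.refl ℕ) OrderDual.toDual).trans toLex

theorem isTiling_iff_sortedLT {L : List (ℕ × ℕ)} :
    IsTiling S r L ↔ (∀ p ∈ L, p.2 ∈ S) ∧ (L.map tileLex).SortedLT ∧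
      (L.map fun p => p.2 * 2 ^ p.1).sum = r := by
  have hlt (p q : ℕ × ℕ) :
      tileLex p < tileLex q ↔ p.1 ≤ q.1 ∧ (p.1 = q.1 → q.2 < p.2) := Prod.Lex.lt_iff'
  rw [List.sortedLT_iff_pairwise, ← List.isChain_iff_pairwise, List.isChain_map]
  simp only [hlt]
  rfl

theorem IsTiling.nodup {L : List (ℕ × ℕ)} (hL : IsTiling S r L) : L.Nodup :=
  .of_map _ (isTiling_iff_sortedLT.1 hL).2.1.nodup

theorem IsTiling.toFinset_mem_tileSets {L : List (ℕ × ℕ)} (hL : IsTiling S r L) :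
    L.toFinset ∈ tileSets S r :=
  ⟨fun p hp => hL.1 p (List.mem_toFinset.1 hp), by
    rw [List.sum_toFinset _ hL.nodup, hL.2.2]⟩

theorem exists_isTiling_toFinset_eq {T : Finset (ℕ × ℕ)} (hT : T ∈ tileSets S r) :
    ∃ L, IsTiling S r L ∧ L.toFinset = T := by
  let L := (T.map tileLex.toEmbedding).sort.map tileLex.symm
  have hmap : L.map tileLex = (T.map tileLex.toEmbedding).sort := by simp [L]
  have htoFinset : L.toFinset = T := by
    ext p
    simp only [L, List.mem_toFinset, List.mem_map, Finset.mem_sort, Finset.mem_map_equiv]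
    exact ⟨fun ⟨_, hq, hqp⟩ => hqp ▸ hq, fun hp => ⟨tileLex p, by simpa using hp, by simp⟩⟩
  have hsorted : (L.map tileLex).SortedLT := hmap ▸ Finset.sortedLT_sort _
  refine ⟨L, isTiling_iff_sortedLT.2 ⟨fun p hp => hT.1 p ?_, hsorted, ?_⟩, htoFinset⟩
  · exact htoFinset ▸ List.mem_toFinset.2 hp
  · rw [← List.sum_toFinset _ (.of_map _ hsorted.nodup), htoFinset, hT.2]

theorem image_toFinset_isTiling : List.toFinset '' {L | IsTiling S r L} = tileSets S r :=
  Set.Subset.antisymm (Set.image_subset_iff.2 fun _ hL => hL.toFinset_mem_tileSets)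
    fun _ hT => exists_isTiling_toFinset_eq hT

theorem image_length_isTiling :
    List.length '' {L | IsTiling S r L} = Finset.card '' tileSets S r := by
  rw [← image_toFinset_isTiling, Set.image_image]
  exact Set.image_congr fun L hL => (List.toFinset_card_of_nodup hL.nodup).symm

theorem Ktilde_nonempty (h : ∃ L, IsTiling S r L) : (Ktilde S r).Nonempty := by
  obtain ⟨L, hL⟩ := h
  exact csInf_mem (s := {n : ℕ∞ | ∃ L, IsTiling S r L ∧ (L.length : ℕ∞) = n}) ⟨_, L, hL, rfl⟩

end Tiles

theorem image_sBox_admissibleTuples {d r : ℕ} {S : Finset ℕ} (hS : S ⊆ Finset.Icc 1 d) :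
    sBox '' admissibleTuples d S r = List.length '' {L | IsTiling S r L} := by
  rw [image_length_isTiling, ← image_tailSum_partCounts, ← image_binaryTiles_partCounts hS,
    Set.image_image, Set.image_image]
  simp only [sBox_tailSum, card_binaryTiles]

theorem exists_admissibleTuples_iff_exists_isTiling {d r : ℕ} {S : Finset ℕ}
    (hS : S ⊆ Finset.Icc 1 d) (P : ℕ → Prop) :
    (∃ k ∈ admissibleTuples d S r, P (sBox k)) ↔ ∃ L, IsTiling S r L ∧ P L.length := by
  rw [← Set.exists_mem_image (p := P), image_sBox_admissibleTuples hS, Set.exists_mem_image]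
  rfl

theorem stmt1 (d r : ℕ) (hd : 0 < d) (hr : 0 < r) (S : Finset ℕ)
    (hS : S ⊆ Finset.Icc 1 d) :
    sInf {n : ℕ∞ | ∃ k : Fin d → ℕ, k ∈ Kset d r ∧
        (∀ i : Fin d, ((i : ℕ) + 1) ∉ S → k i = nextEntry k i) ∧
        ((sBox k : ℕ) : ℕ∞) = n} = stilde S r ∧
    ((∃ k : Fin d → ℕ, k ∈ Kset d r ∧
        ∀ i : Fin d, ((i : ℕ) + 1) ∉ S → k i = nextEntry k i) ↔
      ∃ L : List (ℕ × ℕ), IsTiling S r L) ∧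
    ((∃ L : List (ℕ × ℕ), IsTiling S r L) →
      ∃ k : Fin d → ℕ, k ∈ Kset d r ∧
        (∀ i : Fin d, ((i : ℕ) + 1) ∉ S → k i = nextEntry k i) ∧
        ((sBox k : ℕ) : ℕ∞) = stilde S r) := by
  have hiff := exists_admissibleTuples_iff_exists_isTiling (r := r) hS
  have hvalue (n : ℕ∞) : (∃ k : Fin d → ℕ, k ∈ Kset d r ∧
      (∀ i : Fin d, ((i : ℕ) + 1) ∉ S → k i = nextEntry k i) ∧ (sBox k : ℕ∞) = n) ↔
      ∃ L, IsTiling S r L ∧ (L.length : ℕ∞) = n := by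
    simpa only [admissibleTuples, Set.mem_ofPred_eq, and_assoc] using hiff fun m => (m : ℕ∞) = n
  refine ⟨congrArg sInf (Set.ext hvalue), ?_, fun h => (hvalue _).2 (Ktilde_nonempty h)⟩
  simpa only [admissibleTuples, Set.mem_ofPred_eq, and_true] using hiff fun _ => True
end

section
/- Let S = {1,3,9,11}. Then: (i) for all integers m ≥ 1 and all integers n with 1 ≤ n ≤ 12, s̃(m·2^{n+4}−4, S) ≥ ⌈n/2⌉; (ii) for all integers m ≥ 3, s̃(m·2^{17}−4, S) ≥ 7; and (iii) s̃(2^{17}−4, S) = 6. -/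
open scoped BigOperators

/-!
Reading a tiling of `r` from position `0` upwards, suppose `r + y = m * 2 ^ (N + 1)`. If `T ⊆ S` is
the set of tiles at position `0` and `r'` is what the other tiles cover after moving them down one
position, then `r' + y' = m * 2 ^ N` with `y' = (y + ∑ T) / 2`. So `y` performs a walk on the finite
set `{1, …, ∑ S}` in which a step costs `|T|` tiles, and a potential on this set bounds the average
cost of a step from below. For `S = {1, 3, 9, 11}` the cheapest cycle is
`4 → 2 → 1 → 5 → 8 → 4`, which spends the tiles `9` and `11` in five steps; hence about `2 N / 5`
tiles are needed for `m * 2 ^ N - 4`, and repeating the cycle attains this for `m = 1`.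
-/

section Stilde

variable {S : Finset ℕ} {r : ℕ}

lemma le_stilde {k : ℕ} (h : ∀ L, IsTiling S r L → k ≤ L.length) : (k : ℕ∞) ≤ stilde S r := by
  refine le_sInf ?_
  rintro _ ⟨L, hL, rfl⟩
  exact_mod_cast h L hL

lemma IsTiling.stilde_le_length {L : List (ℕ × ℕ)} (h : IsTiling S r L) :
    stilde S r ≤ L.length :=
  sInf_le ⟨L, h, rfl⟩

end Stilde

/-- The order in which a tiling sequence lists its pairs `(b, ℓ)`: by increasing position `b`, and
at equal positions by decreasing tile `ℓ`. -/
def TileLT (p q : ℕ × ℕ) : Prop := p.1 ≤ q.1 ∧ (p.1 = q.1 → q.2 < p.2)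

instance : IsTrans (ℕ × ℕ) TileLT where
  trans := by
    rintro p q s ⟨hpq, hpq'⟩ ⟨hqs, hqs'⟩
    refine ⟨hpq.trans hqs, fun hps => ?_⟩
    have heq : p.1 = q.1 := by omega
    exact (hqs' (heq ▸ hps)).trans (hpq' heq)

/-- The number covered by a list of pairs `(b, ℓ)`, each standing for the tile `ℓ` at
position `b`. -/
def tileSum (L : List (ℕ × ℕ)) : ℕ := (L.map fun p => p.2 * 2 ^ p.1).sum

lemma isTiling_iff {S : Finset ℕ} {r : ℕ} {L : List (ℕ × ℕ)} :
    IsTiling S r L ↔ (∀ p ∈ L, p.2 ∈ S) ∧ L.Pairwise TileLT ∧ tileSum L = r := by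
  rw [← List.isChain_iff_pairwise]
  rfl

/-- The tiles which `L` places at position `0`. -/
def bottomTiles (L : List (ℕ × ℕ)) : List ℕ :=
  L.filterMap fun
    | (0, l) => some l
    | (_ + 1, _) => none

/-- The tiles which `L` places at positive positions, each moved down by one position. -/
def shiftDown (L : List (ℕ × ℕ)) : List (ℕ × ℕ) :=
  L.filterMap fun
    | (0, _) => none
    | (b + 1, l) => some (b, l)

lemma length_bottomTiles_add_length_shiftDown (L : List (ℕ × ℕ)) :
    (bottomTiles L).length + (shiftDown L).length = L.length := by
  induction L with
  | nil => rfl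
  | cons p L ih =>
    rw [List.length_cons, ← ih]
    obtain ⟨_ | b, l⟩ := p
    · exact Nat.add_right_comm _ _ _
    · rfl

lemma sum_bottomTiles_add_two_mul_tileSum_shiftDown (L : List (ℕ × ℕ)) :
    (bottomTiles L).sum + 2 * tileSum (shiftDown L) = tileSum L := by
  induction L with
  | nil => rfl
  | cons p L ih =>
    obtain ⟨_ | b, l⟩ := p
    · change l + (bottomTiles L).sum + 2 * tileSum (shiftDown L) = l * 2 ^ 0 + tileSum L
      rw [← ih]
      ring
    · change (bottomTiles L).sum + 2 * (l * 2 ^ b + tileSum (shiftDown L)) =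
        l * 2 ^ (b + 1) + tileSum L
      rw [← ih]
      ring

namespace IsTiling

variable {S : Finset ℕ} {r : ℕ} {L : List (ℕ × ℕ)}

lemma ne_nil (h : IsTiling S r L) (hr : r ≠ 0) : L ≠ [] := by
  rintro rfl
  exact hr h.2.2.symm

lemma nodup_bottomTiles (h : IsTiling S r L) : (bottomTiles L).Nodup := by
  refine List.pairwise_filterMap.2 ((isTiling_iff.1 h).2.1.imp ?_)
  rintro ⟨_ | b, l⟩ ⟨_ | b', l'⟩ hlt <;>
    simp only [reduceCtorEq, Option.some.injEq, forall_eq', IsEmpty.forall_iff, implies_true]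
  exact (hlt.2 rfl).ne'

lemma toFinset_bottomTiles_subset (h : IsTiling S r L) : (bottomTiles L).toFinset ⊆ S := by
  intro l hl
  obtain ⟨⟨_ | b, l'⟩, hmem, heq⟩ := List.mem_filterMap.1 (List.mem_toFinset.1 hl)
  · cases heq
    exact h.1 _ hmem
  · cases heq

lemma isTiling_shiftDown (h : IsTiling S r L) :
    IsTiling S (tileSum (shiftDown L)) (shiftDown L) := by
  obtain ⟨hS, hlt, -⟩ := isTiling_iff.1 h
  refine isTiling_iff.2 ⟨fun q hq => ?_, List.pairwise_filterMap.2 (hlt.imp ?_), rfl⟩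
  · obtain ⟨⟨_ | b, l⟩, hmem, heq⟩ := List.mem_filterMap.1 hq
    · cases heq
    · cases heq
      exact hS (b + 1, l) hmem
  · rintro ⟨_ | b, l⟩ ⟨_ | b', l'⟩ hlt <;>
      simp only [reduceCtorEq, Option.some.injEq, forall_eq', IsEmpty.forall_iff, implies_true]
    exact ⟨Nat.le_of_succ_le_succ hlt.1, fun heq => hlt.2 (congrArg (· + 1) heq)⟩

lemma exists_bottom (h : IsTiling S r L) :
    ∃ T ⊆ S, ∃ r' L', IsTiling S r' L' ∧ ∑ t ∈ T, t + 2 * r' = r ∧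
      T.card + L'.length = L.length := by
  refine ⟨_, h.toFinset_bottomTiles_subset, _, _, h.isTiling_shiftDown, ?_, ?_⟩
  · rw [List.sum_toFinset _ h.nodup_bottomTiles, List.map_id',
      sum_bottomTiles_add_two_mul_tileSum_shiftDown, (isTiling_iff.1 h).2.2]
  · rw [List.toFinset_card_of_nodup h.nodup_bottomTiles, length_bottomTiles_add_length_shiftDown]

end IsTiling

/-- A potential `φ` on the walk `y ↦ (y + ∑ T) / 2`, `T ⊆ S`, on `{1, …, ∑ S}` certifying that a
step costs at least `q / p` tiles on average: `φ` drops by at least `q - p |T|` along each step,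
arranged so as to avoid subtraction. The state `0` is left out: it can stay put at no cost, but is
never reached from another state. -/
def IsTilePotential (S : Finset ℕ) (p q : ℕ) (φ : ℕ → ℕ) : Prop :=
  ∀ y ∈ Finset.Icc 1 (∑ t ∈ S, t), ∀ T ∈ S.powerset, 2 ∣ y + ∑ t ∈ T, t →
    q + φ ((y + ∑ t ∈ T, t) / 2) ≤ p * T.card + φ y

instance (S : Finset ℕ) (p q : ℕ) (φ : ℕ → ℕ) : Decidable (IsTilePotential S p q φ) := by
  unfold IsTilePotential
  infer_instance

theorem IsTilePotential.mul_add_le {S : Finset ℕ} {p q c m : ℕ} {φ : ℕ → ℕ}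
    (hφ : IsTilePotential S p q φ)
    (hbase : ∀ r L, IsTiling S r L → ∀ y ∈ Finset.Icc 1 (∑ t ∈ S, t), r + y = m →
      c ≤ p * L.length + φ y)
    (N : ℕ) {r y : ℕ} {L : List (ℕ × ℕ)} (hL : IsTiling S r L)
    (hy : y ∈ Finset.Icc 1 (∑ t ∈ S, t)) (hr : r + y = m * 2 ^ N) :
    q * N + c ≤ p * L.length + φ y := by
  induction N generalizing r y L with
  | zero => simpa using hbase r L hL y hy (by simpa using hr)
  | succ N ih =>
    obtain ⟨T, hT, r', L', hL', rfl, hlen⟩ := hL.exists_bottom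
    have hTS : ∑ t ∈ T, t ≤ ∑ t ∈ S, t := Finset.sum_le_sum_of_subset hT
    rw [pow_succ, ← mul_assoc] at hr
    have hdvd : 2 ∣ y + ∑ t ∈ T, t := by omega
    have hstep := hφ y hy T (Finset.mem_powerset.2 hT) hdvd
    rw [Finset.mem_Icc] at hy
    have hrec := ih hL' (y := (y + ∑ t ∈ T, t) / 2) (Finset.mem_Icc.2 (by omega)) (by omega)
    rw [← hlen]
    linarith

/-- A potential for the tiles `1, 3, 9, 11` at the rate of two tiles per five steps, tabulated on
`{0, …, 24}`. For `1 ≤ y` the entry is one more than the maximum of `2 * steps - 5 * tiles` over the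
walks from `y`, where a walk ending at `1` is charged one extra tile, since for `2 ≤ m` it
leaves `m - 1 ≠ 0` to be tiled; the entry at `0` is a filler outside the walk. -/
def tilePotential (y : ℕ) : ℕ :=
  [0, 0, 2, 1, 4, 3, 3, 3, 6, 2, 5, 2, 5, 3, 5, 3, 8, 2, 4, 2, 7, 5, 4, 5, 7].getD y 0

lemma isTilePotential_tilePotential : IsTilePotential {1, 3, 9, 11} 5 2 tilePotential := by
  decide +kernel

section LowerBound

variable {r m N : ℕ} {L : List (ℕ × ℕ)}

lemma two_mul_le_five_mul_length_add_four (hL : IsTiling {1, 3, 9, 11} r L)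
    (hr : r + 4 = m * 2 ^ N) : 2 * N ≤ 5 * L.length + 4 :=
  isTilePotential_tilePotential.mul_add_le (c := 0) (fun _ _ _ _ _ _ => Nat.zero_le _) N hL
    (by decide) hr

lemma five_mul_length_add_tilePotential_pos {S : Finset ℕ} {y : ℕ} (hL : IsTiling S r L)
    (hy : y ∈ Finset.Icc 1 24) (hry : 2 ≤ r + y) : 0 < 5 * L.length + tilePotential y := by
  have htable : ∀ y ∈ Finset.Icc 2 24, 0 < tilePotential y := by decide
  rw [Finset.mem_Icc] at hy
  obtain rfl | hy2 := hy.1.eq_or_lt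
  · have := List.length_pos_iff.2 (hL.ne_nil (by omega))
    omega
  · exact Nat.add_pos_right _ (htable y (Finset.mem_Icc.2 ⟨hy2, hy.2⟩))

lemma two_mul_lt_five_mul_length_add_four (hm : 2 ≤ m) (hL : IsTiling {1, 3, 9, 11} r L)
    (hr : r + 4 = m * 2 ^ N) : 2 * N < 5 * L.length + 4 :=
  isTilePotential_tilePotential.mul_add_le (c := 1)
    (fun _ _ hL _ hy hry => five_mul_length_add_tilePotential_pos hL hy (hry ▸ hm)) N hL
    (by decide) hr

end LowerBound

/-- The tiling of `2 ^ (5 * k + 2) - 4` that uses `k` copies of `9 * 2 ^ 2 + 11 * 2 ^ 3 = 4 * 31`,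
each five positions above the previous one. -/
def periodicTiling (k : ℕ) : List (ℕ × ℕ) :=
  (List.range k).flatMap fun i => [(5 * i + 2, 9), (5 * i + 3, 11)]

lemma length_periodicTiling (k : ℕ) : (periodicTiling k).length = 2 * k := by
  simp [periodicTiling, mul_comm]

lemma tileSum_periodicTiling (k : ℕ) : tileSum (periodicTiling k) + 4 = 2 ^ (5 * k + 2) := by
  induction k with
  | zero => rfl
  | succ k ih =>
    have hsucc : tileSum (periodicTiling (k + 1)) =
        tileSum (periodicTiling k) + (9 * 2 ^ (5 * k + 2) + 11 * 2 ^ (5 * k + 3)) := by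
      simp [periodicTiling, tileSum, List.range_succ]
    rw [hsucc, add_right_comm, ih]
    ring

lemma isTiling_periodicTiling (k : ℕ) :
    IsTiling {1, 3, 9, 11} (2 ^ (5 * k + 2) - 4) (periodicTiling k) := by
  refine isTiling_iff.2 ⟨fun p hp => ?_, List.pairwise_flatMap.2 ⟨fun i _ => ?_, ?_⟩,
    Nat.eq_sub_of_add_eq (tileSum_periodicTiling k)⟩
  · obtain ⟨i, -, hi⟩ := List.mem_flatMap.1 hp
    simp only [List.mem_cons, List.not_mem_nil, or_false] at hi
    obtain rfl | rfl := hi <;> simp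
  · simp [TileLT]
  · refine List.pairwise_lt_range.imp fun {i j} hij => ?_
    simp only [List.mem_cons, List.not_mem_nil, or_false, TileLT]
    rintro _ (rfl | rfl) _ (rfl | rfl) <;> omega

lemma mul_two_pow_sub_four_add_four {m N : ℕ} (hm : 1 ≤ m) (hN : 2 ≤ N) :
    m * 2 ^ N - 4 + 4 = m * 2 ^ N :=
  Nat.sub_add_cancel (le_mul_of_one_le_of_le hm (Nat.pow_le_pow_right two_pos hN))

theorem stmt6_general :
    (∀ m N : ℕ, 1 ≤ m → 2 ≤ N →
      ((2 * N / 5 : ℕ) : ℕ∞) ≤ stilde {1, 3, 9, 11} (m * 2 ^ N - 4)) ∧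
    (∀ m N : ℕ, 2 ≤ m → 2 ≤ N →
      (((2 * N + 1) / 5 : ℕ) : ℕ∞) ≤ stilde {1, 3, 9, 11} (m * 2 ^ N - 4)) ∧
    ∀ k : ℕ, stilde {1, 3, 9, 11} (2 ^ (5 * k + 2) - 4) = (2 * k : ℕ) := by
  have hlower : ∀ m N : ℕ, 1 ≤ m → 2 ≤ N →
      ((2 * N / 5 : ℕ) : ℕ∞) ≤ stilde {1, 3, 9, 11} (m * 2 ^ N - 4) := by
    refine fun m N hm hN => le_stilde fun L hL => ?_
    have := two_mul_le_five_mul_length_add_four hL (mul_two_pow_sub_four_add_four hm hN)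
    omega
  refine ⟨hlower, fun m N hm hN => le_stilde fun L hL => ?_, fun k => le_antisymm ?_ ?_⟩
  · have := two_mul_lt_five_mul_length_add_four hm hL
      (mul_two_pow_sub_four_add_four (one_le_two.trans hm) hN)
    omega
  · exact length_periodicTiling k ▸ (isTiling_periodicTiling k).stilde_le_length
  · have hk : 2 * (5 * k + 2) / 5 = 2 * k := by omega
    simpa only [hk, one_mul] using hlower 1 (5 * k + 2) le_rfl (by omega)

theorem stmt6 :
    (∀ m n : ℕ, 1 ≤ m → 1 ≤ n → n ≤ 12 →
      (((n + 1) / 2 : ℕ) : ℕ∞) ≤ stilde {1, 3, 9, 11} (m * 2 ^ (n + 4) - 4)) ∧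
    (∀ m : ℕ, 3 ≤ m → (7 : ℕ∞) ≤ stilde {1, 3, 9, 11} (m * 2 ^ 17 - 4)) ∧
    stilde {1, 3, 9, 11} (2 ^ 17 - 4) = 6 := by
  exact ⟨fun m n hm _ hn => le_trans (mod_cast by omega) (stmt6_general.1 m (n + 4) hm (by omega)),
    fun m hm => stmt6_general.2.1 m 17 (by omega) (by omega), stmt6_general.2.2 3⟩
end

section
/- Let S = {3,5,9,11,17} and r = 2^{26}−4. Then s̃(r,S) = 9 and the unique r-tiling sequence with tiles in S of length 9 is (2,11),(4,17),(6,11),(10,11),(12,17),(14,11),(18,11),(20,17),(22,11); that is, 2^{26}−4 = 11·2^{22}+17·2^{20}+11·2^{18}+11·2^{14}+17·2^{12}+11·2^{10}+11·2^{6}+17·2^{4}+11·2^{2} and K̃(r,S) consists of exactly this one sequence. -/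
open scoped BigOperators

/-
Add up the tiles column by column, starting from the lowest binary position. Since
`r + c + 1 = 2 ^ k` says that `r` plus an incoming carry `c` is a string of `k` ones, the set `T` of
tiles at position `0` makes `c + ∑ T` odd, and the rest of the tiling, moved down one position,
faces the same problem with `k - 1` ones and the carry `(c + ∑ T) / 2`. Carries never exceed `∑ S`,
so a tiling is a walk in a finite graph. A potential `φ` on its vertices that satisfies
`3 + φ c' ≤ 8 * #T + φ c` along every edge shows that `ν` tiles cover `k` ones only if
`3 * k ≤ 8 * ν + φ c`. Equality forces every edge of the walk to be tight, and from the carries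
`2 ^ a - 1` the tight edges leave no choice: they run into the cycle
`0 → 5 → 2 → 9 → 4 → 7 → 3 → 1 → 0`, whose tiles `11`, `17`, `11` give
`11 + 17 * 2 ^ 2 + 11 * 2 ^ 4 = 255`.
-/

open Finset

section Tiling

variable {S : Finset ℕ} {r : ℕ} {L : List (ℕ × ℕ)}

theorem isTiling_iff_pairwise :
    IsTiling S r L ↔ (∀ p ∈ L, p.2 ∈ S) ∧
      L.Pairwise (fun p q => p.1 ≤ q.1 ∧ (p.1 = q.1 → q.2 < p.2)) ∧
        (L.map fun p => p.2 * 2 ^ p.1).sum = r := by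
  have : IsTrans (ℕ × ℕ) fun p q => p.1 ≤ q.1 ∧ (p.1 = q.1 → q.2 < p.2) := ⟨by grind⟩
  exact and_congr_right' (and_congr_left' List.isChain_iff_pairwise)

theorem isTiling_nil : IsTiling S r [] ↔ r = 0 := by
  simp [isTiling_iff_pairwise, eq_comm]

theorem isTiling_cons {b l : ℕ} :
    IsTiling S r ((b, l) :: L) ↔
      l ∈ S ∧ (∀ p ∈ L, b ≤ p.1 ∧ (b = p.1 → p.2 < l)) ∧
        ∃ r', IsTiling S r' L ∧ l * 2 ^ b + r' = r := by
  simp only [isTiling_iff_pairwise, List.pairwise_cons, List.forall_mem_cons, List.map_cons,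
    List.sum_cons]
  grind

theorem IsTiling.eq_nil_of_zero (hS : 0 ∉ S) (h : IsTiling S 0 L) : L = [] := by
  rcases L with _ | ⟨⟨b, l⟩, L⟩
  · rfl
  · obtain ⟨hl, -, r', -, hsum⟩ := isTiling_cons.1 h
    obtain rfl : l = 0 := by simpa using Nat.eq_zero_of_add_eq_zero_right hsum
    exact absurd hl hS

theorem IsTiling.stilde_eq_length (hL : IsTiling S r L)
    (hmin : ∀ L', IsTiling S r L' → L.length ≤ L'.length) : stilde S r = L.length := by
  refine le_antisymm (sInf_le ⟨L, hL, rfl⟩) (le_sInf ?_)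
  rintro _ ⟨L', hL', rfl⟩
  exact_mod_cast hmin L' hL'

theorem IsTiling.Ktilde_eq_singleton (hL : IsTiling S r L) (hlen : stilde S r = L.length)
    (huniq : ∀ L', IsTiling S r L' → L'.length = L.length → L' = L) : Ktilde S r = {L} := by
  refine Set.eq_singleton_iff_unique_mem.2 ⟨⟨hL, hlen.symm⟩, fun L' ⟨hL', hlen'⟩ => ?_⟩
  exact huniq L' hL' (by exact_mod_cast hlen'.trans hlen)

end Tiling

section Stack

variable {S T : Finset ℕ} {r : ℕ} {L M : List (ℕ × ℕ)}

/-- The sequence with set of tiles `T` at position `0`, listed in decreasing order, on top of which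
the sequence `M` is placed one position higher. -/
def stack (T : Finset ℕ) (M : List (ℕ × ℕ)) : List (ℕ × ℕ) :=
  (T.sort (· ≥ ·)).map (fun l => (0, l)) ++ M.map (fun p => (p.1 + 1, p.2))

theorem length_stack : (stack T M).length = #T + M.length := by
  simp [stack]

theorem stack_insert {l : ℕ} (hl : ∀ t ∈ T, t < l) :
    stack (insert l T) M = (0, l) :: stack T M := by
  rw [stack, sort_insert _ (fun t ht => (hl t ht).le) fun h => (hl l h).false]
  rfl

theorem mk_zero_mem_stack {l : ℕ} : (0, l) ∈ stack T M ↔ l ∈ T := by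
  simp [stack]

theorem IsTiling.exists_eq_stack (h : IsTiling S r L) :
    ∃ T ⊆ S, ∃ m M, IsTiling S m M ∧ L = stack T M ∧ ∑ l ∈ T, l + 2 * m = r := by
  induction L generalizing r with
  | nil => exact ⟨∅, empty_subset S, 0, [], isTiling_nil.2 rfl, by simp [stack],
    (isTiling_nil.1 h).symm⟩
  | cons p L ih =>
    obtain ⟨b, l⟩ := p
    obtain ⟨hl, hlt, _, hL, rfl⟩ := isTiling_cons.1 h
    obtain ⟨T, hT, m, M, hM, rfl, rfl⟩ := ih hL
    cases b with
    | zero =>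
      have hTl : ∀ t ∈ T, t < l := fun t ht => (hlt (0, t) (mk_zero_mem_stack.2 ht)).2 rfl
      refine ⟨insert l T, insert_subset hl hT, m, M, hM, (stack_insert hTl).symm, ?_⟩
      rw [sum_insert fun h => (hTl l h).false]
      ring
    | succ b =>
      obtain rfl : T = ∅ := eq_empty_of_forall_notMem fun t ht =>
        Nat.not_succ_le_zero b (hlt (0, t) (mk_zero_mem_stack.2 ht)).1
      have hlt' : ∀ p ∈ M, b ≤ p.1 ∧ (b = p.1 → p.2 < l) := fun p hp => by
        simpa using hlt (p.1 + 1, p.2) (by simpa [stack] using hp)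
      exact ⟨∅, hT, l * 2 ^ b + m, (b, l) :: M, isTiling_cons.2 ⟨hl, hlt', m, hM, rfl⟩,
        by simp [stack], by ring⟩

end Stack

section Potential

variable {S : Finset ℕ} {p q c k r : ℕ} {φ : ℕ → ℕ} {D : Finset ℕ} {L L' : List (ℕ × ℕ)}

/-- The carry out of a binary column with incoming carry `c` in which the tiles `T` start. -/
def carry (c : ℕ) (T : Finset ℕ) : ℕ := (c + ∑ l ∈ T, l) / 2

theorem carry_le_sum {T : Finset ℕ} (hT : T ⊆ S) (hc : c ≤ ∑ l ∈ S, l) :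
    carry c T ≤ ∑ l ∈ S, l := by
  have := sum_le_sum_of_subset (f := id) hT
  simp only [id] at this
  unfold carry
  omega

theorem IsTiling.exists_eq_stack_of_add_eq_two_pow (h : IsTiling S r L)
    (hr : r + c + 1 = 2 ^ (k + 1)) :
    ∃ T ⊆ S, ∃ m M, IsTiling S m M ∧ L = stack T M ∧ Odd (c + ∑ l ∈ T, l) ∧
      m + carry c T + 1 = 2 ^ k := by
  obtain ⟨T, hT, m, M, hM, hL, rfl⟩ := h.exists_eq_stack
  rw [pow_succ] at hr
  exact ⟨T, hT, m, M, hM, hL, Nat.odd_iff.2 (by omega), by unfold carry; omega⟩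

/-- A potential certifying that tiles from `S` cover ones at a rate of at most `q / p` per tile: in
every column showing the digit one, `p` plus the gain in potential is at most `q` per tile used. -/
def IsPotential (S : Finset ℕ) (p q : ℕ) (φ : ℕ → ℕ) : Prop :=
  ∀ c ≤ ∑ l ∈ S, l, ∀ T ⊆ S, Odd (c + ∑ l ∈ T, l) → p + φ (carry c T) ≤ q * #T + φ c

/-- The column with carry `c` and tiles `T` shows the digit one and attains equality in
`IsPotential`. -/
def IsTight (p q : ℕ) (φ : ℕ → ℕ) (c : ℕ) (T : Finset ℕ) : Prop :=
  Odd (c + ∑ l ∈ T, l) ∧ p + φ (carry c T) = q * #T + φ c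

/-- Walks along tight columns that start in `D` stay in `D` and are unique. -/
def IsRigidOn (S : Finset ℕ) (p q : ℕ) (φ : ℕ → ℕ) (D : Finset ℕ) : Prop :=
  ∀ c ∈ D, ∀ T ⊆ S, IsTight p q φ c T →
    carry c T ∈ D ∧ ∀ T' ⊆ S, IsTight p q φ c T' → T = T'

theorem IsPotential.mul_le (hφ : IsPotential S p q φ) (hc : c ≤ ∑ l ∈ S, l)
    (h : IsTiling S r L) (hr : r + c + 1 = 2 ^ k) : p * k ≤ q * L.length + φ c := by
  induction k generalizing c r L with
  | zero => simp
  | succ k ih =>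
    obtain ⟨T, hT, m, M, hM, rfl, hodd, hm⟩ := h.exists_eq_stack_of_add_eq_two_pow hr
    calc p * (k + 1) = p * k + p := by ring
      _ ≤ q * M.length + (p + φ (carry c T)) := by linarith [ih (carry_le_sum hT hc) hM hm]
      _ ≤ q * M.length + (q * #T + φ c) := by grw [hφ c hc T hT hodd]
      _ = q * (stack T M).length + φ c := by rw [length_stack]; ring

theorem IsPotential.exists_isTight (hφ : IsPotential S p q φ) (hc : c ≤ ∑ l ∈ S, l)
    (h : IsTiling S r L) (hr : r + c + 1 = 2 ^ (k + 1))
    (hL : p * (k + 1) = q * L.length + φ c) :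
    ∃ T ⊆ S, ∃ m M, IsTight p q φ c T ∧ IsTiling S m M ∧ L = stack T M ∧
      m + carry c T + 1 = 2 ^ k ∧ p * k = q * M.length + φ (carry c T) := by
  obtain ⟨T, hT, m, M, hM, rfl, hodd, hm⟩ := h.exists_eq_stack_of_add_eq_two_pow hr
  have hstep := hφ c hc T hT hodd
  have hrest := hφ.mul_le (carry_le_sum hT hc) hM hm
  rw [length_stack] at hL
  exact ⟨T, hT, m, M, ⟨hodd, by linarith⟩, hM, rfl, hm, by linarith⟩

theorem IsPotential.eq_of_mul_eq (hφ : IsPotential S p q φ) (hD : IsRigidOn S p q φ D)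
    (hS : 0 ∉ S) (hc : c ≤ ∑ l ∈ S, l) (hcD : c ∈ D) (h : IsTiling S r L) (h' : IsTiling S r L')
    (hr : r + c + 1 = 2 ^ k) (hL : p * k = q * L.length + φ c)
    (hL' : p * k = q * L'.length + φ c) : L = L' := by
  induction k generalizing c r L L' with
  | zero =>
    obtain rfl : r = 0 := by rw [pow_zero] at hr; omega
    rw [h.eq_nil_of_zero hS, h'.eq_nil_of_zero hS]
  | succ k ih =>
    obtain ⟨T, hTS, m, M, hT, hM, rfl, hm, hk⟩ := hφ.exists_isTight hc h hr hL
    obtain ⟨T', hTS', m', M', hT', hM', rfl, hm', hk'⟩ := hφ.exists_isTight hc h' hr hL'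
    obtain ⟨hcD', huniq⟩ := hD c hcD T hTS hT
    obtain rfl := huniq T' hTS' hT'
    obtain rfl : m = m' := by omega
    rw [ih (carry_le_sum hTS hc) hcD' hM hM' hm hk hk']

theorem IsPotential.stilde_eq_and_Ktilde_eq (hφ : IsPotential S p q φ) (hD : IsRigidOn S p q φ D)
    (hS : 0 ∉ S) (hq : 0 < q) (hc : c ≤ ∑ l ∈ S, l) (hcD : c ∈ D) (h : IsTiling S r L)
    (hr : r + c + 1 = 2 ^ k) (hL : p * k = q * L.length + φ c) :
    stilde S r = L.length ∧ Ktilde S r = {L} := by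
  have hlen : stilde S r = L.length := h.stilde_eq_length fun L' h' =>
    Nat.le_of_mul_le_mul_left (by linarith [hφ.mul_le hc h' hr]) hq
  refine ⟨hlen, h.Ktilde_eq_singleton hlen fun L' h' hlen' => ?_⟩
  exact hφ.eq_of_mul_eq hD hS hc hcD h' h hr (hlen' ▸ hL) hL

end Potential

section RepeatedTiling

/-- `n` copies of the block `11 + 17 * 2 ^ 2 + 11 * 2 ^ 4 = 255` side by side, from position `b`. -/
def repeatedTiling (b : ℕ) : ℕ → List (ℕ × ℕ)
  | 0 => []
  | n + 1 => (b, 11) :: (b + 2, 17) :: (b + 4, 11) :: repeatedTiling (b + 8) n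

theorem length_repeatedTiling (b n : ℕ) : (repeatedTiling b n).length = 3 * n := by
  induction n generalizing b with
  | zero => rfl
  | succ n ih => simp only [repeatedTiling, List.length_cons, ih]; ring

theorem le_fst_of_mem_repeatedTiling {b n : ℕ} {p : ℕ × ℕ} (hp : p ∈ repeatedTiling b n) :
    b ≤ p.1 := by
  induction n generalizing b with
  | zero => simp [repeatedTiling] at hp
  | succ n ih => grind [repeatedTiling]

theorem isTiling_repeatedTiling {S : Finset ℕ} (h11 : 11 ∈ S) (h17 : 17 ∈ S) (b n : ℕ) :
    IsTiling S (2 ^ (b + 8 * n) - 2 ^ b) (repeatedTiling b n) := by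
  induction n generalizing b with
  | zero => exact isTiling_nil.2 (by simp)
  | succ n ih =>
    have hle : ∀ p ∈ repeatedTiling (b + 8) n, b + 8 ≤ p.1 := fun _ => le_fst_of_mem_repeatedTiling
    have hpow : 2 ^ (b + 8) ≤ 2 ^ (b + 8 + 8 * n) := Nat.pow_le_pow_right two_pos (by omega)
    refine isTiling_cons.2 ⟨h11, by grind, _, isTiling_cons.2 ⟨h17, by grind, _,
      isTiling_cons.2 ⟨h11, by grind, _, ih (b + 8), rfl⟩, rfl⟩, ?_⟩
    rw [show b + 8 * (n + 1) = b + 8 + 8 * n by ring]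
    simp only [pow_add] at hpow ⊢
    omega

end RepeatedTiling

/-- A potential for the tiles `3, 5, 9, 11, 17`, tabulated on the carries `c ≤ 45` (`45` is the sum
of the tiles) and `0` beyond. It is the least one for `p = 3` and `q = 8`, the limit of value
iteration: at `c` it is the maximum of `3 * columns - 8 * tiles` over all walks from `c`. -/
def carryPotential (c : ℕ) : ℕ :=
  [0, 3, 2, 6, 4, 5, 4, 9, 2, 7, 4, 8, 4, 7, 7, 12, 2, 5, 3, 10, 7, 7, 7, 11, 2, 7, 7, 10, 7, 10,
    6, 15, 2, 5, 5, 8, 6, 6, 6, 13, 2, 10, 6, 10, 6, 10].getD c 0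

theorem isPotential_carryPotential : IsPotential {3, 5, 9, 11, 17} 3 8 carryPotential := by
  unfold IsPotential
  decide +kernel

theorem isRigidOn_carryPotential :
    IsRigidOn {3, 5, 9, 11, 17} 3 8 carryPotential {31, 15, 0, 5, 2, 9, 4, 7, 3, 1} := by
  unfold IsRigidOn IsTight
  decide +kernel

theorem stmt11_general {a : ℕ} (ha : a ≤ 5) (n : ℕ) :
    stilde {3, 5, 9, 11, 17} (2 ^ (a + 8 * n) - 2 ^ a) = 3 * n ∧
      Ktilde {3, 5, 9, 11, 17} (2 ^ (a + 8 * n) - 2 ^ a) = {repeatedTiling a n} := by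
  have hpow : 2 ^ a ≤ 2 ^ (a + 8 * n) := Nat.pow_le_pow_right two_pos (by omega)
  have hφ : carryPotential (2 ^ a - 1) = 3 * a := by interval_cases a <;> rfl
  have h := isPotential_carryPotential.stilde_eq_and_Ktilde_eq isRigidOn_carryPotential
    (c := 2 ^ a - 1) (k := a + 8 * n) (by decide) (by norm_num)
    (by interval_cases a <;> decide) (by interval_cases a <;> simp)
    (isTiling_repeatedTiling (by decide) (by decide) a n)
    (by have := Nat.one_le_two_pow (n := a); omega)
    (by rw [length_repeatedTiling, hφ]; ring)
  simpa [length_repeatedTiling] using h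

theorem stmt11 :
    (2 ^ 26 - 4 : ℕ) = 11 * 2 ^ 22 + 17 * 2 ^ 20 + 11 * 2 ^ 18 + 11 * 2 ^ 14 +
      17 * 2 ^ 12 + 11 * 2 ^ 10 + 11 * 2 ^ 6 + 17 * 2 ^ 4 + 11 * 2 ^ 2 ∧
    stilde {3, 5, 9, 11, 17} (2 ^ 26 - 4) = 9 ∧
    Ktilde {3, 5, 9, 11, 17} (2 ^ 26 - 4) =
      {[(2, 11), (4, 17), (6, 11), (10, 11), (12, 17), (14, 11), (18, 11), (20, 17),
        (22, 11)]} :=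
  ⟨by norm_num, stmt11_general (a := 2) (by norm_num) 3⟩
end
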